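/- arXiv:0811.4230 — 2 statements merged into one kernel-verified Lean document; each statement's English description precedes it below -/
import Mathlib

section
/- Let (X,T) be a general topological dynamical system and U a finite open cover of X. Then: (1) h_U(T,K) = h_U(T,TK) for every K ⊆ X, and the entropy hyper-function H : 2^X → [0, h_top(T,X)], H(K) = h(T,K), satisfies H(T̂K) = H(K) where T̂(K) = TK; (2) the function K ↦ h_U(T,K) is Borel measurable on the hyperspace 2^X equipped with the Hausdorff metric; (3) the entropy hyper-function H is Borel measurable on 2^X. -/
/-!
The join `U_0^n` is `U_0^{n-1} ∨ T⁻ⁿU` and also `U ∨ T⁻¹U_0^{n-1}`. Since `N(T⁻¹V, K) = N(V, TK)`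
and joining a cover with `T⁻ⁱU` multiplies `N` by a factor between `1` and `|U|`, both
`N(U_0^{n-1}, K)` and `N(U_0^{n-1}, TK)` agree with `N(U_0^n, K)` up to the factor `|U|`, which does
not affect exponential growth.

For an open cover `V`, the number `N(V, K)` is upper semicontinuous in `K`: a subfamily of `V` that
covers `K` covers all nearby compact sets. Hence `K ↦ h_U(T, K)` is a `limsup` of a sequence of
Borel functions. By compactness every open cover is refined by a finite cover taken from a fixed
countable basis, so the supremum defining `h(T, K)` may be restricted to countably many covers.
-/

open Filter Set Metric MeasureTheory
open scoped ENNReal Topology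

noncomputable section

variable {X Y : Type*}

def IsSep [PseudoMetricSpace X] (T : X → X) (n : ℕ) (ε : ℝ) (E : Set X) : Prop :=
  E.Pairwise fun x y => ∃ i < n, ε < dist (T^[i] x) (T^[i] y)

def sepMaxCard [PseudoMetricSpace X] (T : X → X) (n : ℕ) (ε : ℝ) (K : Set X) : ℝ≥0∞ :=
  ⨆ (E : Finset X) (_ : ↑E ⊆ K ∧ IsSep T n ε (↑E : Set X)), (E.card : ℝ≥0∞)

def sepEnt [PseudoMetricSpace X] (T : X → X) (ε : ℝ) (K : Set X) : EReal :=
  Filter.atTop.limsup fun n : ℕ => ENNReal.log (sepMaxCard T n ε K) / (n : EReal)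

def subEnt [PseudoMetricSpace X] (T : X → X) (K : Set X) : EReal :=
  ⨆ (ε : ℝ) (_ : 0 < ε), sepEnt T ε K

/-- `(X,T)` is lowerable. -/
def Lowerable [PseudoMetricSpace X] (T : X → X) : Prop :=
  ∀ h : EReal, 0 ≤ h → h ≤ subEnt T (univ : Set X) →
    ∃ K : Set X, K.Nonempty ∧ IsCompact K ∧ subEnt T K = h

/-- `(X,T)` is hereditarily lowerable. -/
def HerLowerable [PseudoMetricSpace X] (T : X → X) : Prop :=
  ∀ K : Set X, K.Nonempty → IsCompact K → ∀ h : EReal, 0 ≤ h → h ≤ subEnt T K →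
    ∃ K' : Set X, K' ⊆ K ∧ K'.Nonempty ∧ IsCompact K' ∧ subEnt T K' = h

/-- `(X,T)` is hereditarily uniformly lowerable: the lowering subset can moreover be chosen
with at most one limit (accumulation) point. -/
def HUL [PseudoMetricSpace X] (T : X → X) : Prop :=
  ∀ K : Set X, K.Nonempty → IsCompact K → ∀ h : EReal, 0 ≤ h → h ≤ subEnt T K →
    ∃ K' : Set X, K' ⊆ K ∧ K'.Nonempty ∧ IsCompact K' ∧ subEnt T K' = h ∧
      {x | AccPt x (𝓟 K')}.Subsingleton

/-- `Φ_ε(x) = {y : d(T^n x, T^n y) ≤ ε for all n ≥ 0}`. -/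
def Phi [PseudoMetricSpace X] (T : X → X) (ε : ℝ) (x : X) : Set X :=
  {y | ∀ n : ℕ, dist (T^[n] x) (T^[n] y) ≤ ε}

/-- `h*_T(ε) = sup_x h(T, Φ_ε(x))`. -/
def hStar [PseudoMetricSpace X] (T : X → X) (ε : ℝ) : EReal :=
  ⨆ x : X, subEnt T (Phi T ε x)

/-- `(X,T)` is asymptotically `h`-expansive: `h*_T(ε) → 0` as `ε → 0+`. -/
def AsympHExpansive [PseudoMetricSpace X] (T : X → X) : Prop :=
  Tendsto (fun ε : ℝ => hStar T ε) (𝓝[>] 0) (𝓝 (0 : EReal))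

/-- `T^n` for `n : ℤ`, for a homeomorphism `T`. -/
def iterZ [TopologicalSpace X] (T : X ≃ₜ X) : ℤ → X → X
  | Int.ofNat n => (⇑T)^[n]
  | Int.negSucc n => (⇑T.symm)^[n + 1]

/-- `T` is expansive with expansive constant `δ`. -/
def ExpansiveWith [MetricSpace X] (T : X ≃ₜ X) (δ : ℝ) : Prop :=
  ∀ x y : X, x ≠ y → ∃ n : ℤ, δ < dist (iterZ T n x) (iterZ T n y)

/-- `K ⪰ 𝒲` : `K` is contained in some member of the family `𝒲`. -/
def Refines (K : Set X) (W : Finset (Set X)) : Prop := ∃ A ∈ W, K ⊆ A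

/-- The join `U ∨ V` of two finite covers. -/
def covJoin (U V : Finset (Set X)) : Finset (Set X) :=
  letI := Classical.decEq (Set X)
  (U ×ˢ V).image fun p => p.1 ∩ p.2

/-- `dynCov T U n = U_0^{n-1} = ⋁_{i=0}^{n-1} T^{-i} U` (with `U_0^{-1} = {univ}`). -/
def dynCov (T : X → X) (U : Finset (Set X)) : ℕ → Finset (Set X)
  | 0 => {(univ : Set X)}
  | n + 1 =>
      letI := Classical.decEq (Set X)
      covJoin (dynCov T U n) (U.image fun A => T^[n] ⁻¹' A)

/-- `n_{T,U}(K)`: `0` if `K ⋠ U`; `+∞` if `T^i K ⪰ U` for all `i`; otherwise the largest `j`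
with `T^i K ⪰ U` for all `0 ≤ i ≤ j-1`. -/
def nTU (T : X → X) (U : Finset (Set X)) (K : Set X) : ℕ∞ :=
  ⨆ (j : ℕ) (_ : ∀ i < j, Refines (T^[i] '' K) U), (j : ℕ∞)

/-- `e^{-λ n}` for `n : ℕ∞`, valued in `ℝ≥0∞` (with the conventions `e^{-λ·∞} = 0` for `λ > 0`,
`= 1` for `λ = 0` and `= ∞` for `λ < 0`). -/
def expWeight (lam : ℝ) (n : ℕ∞) : ℝ≥0∞ :=
  if n = ⊤ then (if 0 < lam then 0 else if lam = 0 then 1 else ⊤)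
  else ENNReal.ofReal (Real.exp (-(lam * (n.toNat : ℝ))))

/-- `m_{T,U}(K,λ,k)`: the infimum of `∑_{E ∈ 𝓔} e^{-λ n_{T,U}(E)}` over all countable families
`𝓔` of subsets of `X` with `∪𝓔 ⊇ K` and `E ⪰ U_0^{k-1}` for every `E ∈ 𝓔`. -/
def mTU (T : X → X) (U : Finset (Set X)) (K : Set X) (lam : ℝ) (k : ℕ) : ℝ≥0∞ :=
  ⨅ (ℰ : Set (Set X)) (_ : ℰ.Countable ∧ K ⊆ ⋃₀ ℰ ∧ ∀ E ∈ ℰ, Refines E (dynCov T U k)),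
    ∑' E : ℰ, expWeight lam (nTU T U (E : Set X))

/-- `m_{T,U}(K,λ) = lim_{k→∞} m_{T,U}(K,λ,k)`; since `m_{T,U}(K,λ,k)` is nondecreasing in `k`,
the limit is the supremum. -/
def mTUlim (T : X → X) (U : Finset (Set X)) (K : Set X) (lam : ℝ) : ℝ≥0∞ :=
  ⨆ k : ℕ, mTU T U K lam k

/-- `h^B_U(T,K) = inf {λ : m_{T,U}(K,λ) = 0}`. -/
def hBU (T : X → X) (U : Finset (Set X)) (K : Set X) : EReal :=
  ⨅ (lam : ℝ) (_ : mTUlim T U K lam = 0), (lam : EReal)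

/-- The dimensional entropy `h^B(T,K) = sup_U h^B_U(T,K)`, supremum over finite open covers. -/
def hB [TopologicalSpace X] (T : X → X) (K : Set X) : EReal :=
  ⨆ (U : Finset (Set X)) (_ : (∀ A ∈ U, IsOpen A) ∧ ⋃₀ (↑U : Set (Set X)) = univ),
    hBU T U K

/-- `N(U,K)`: the minimal cardinality of a subfamily of `U` covering `K` (`0` for `K = ∅`,
`∞` if no subfamily covers `K`). -/
def covCard (U : Finset (Set X)) (K : Set X) : ℝ≥0∞ :=
  ⨅ (V : Finset (Set X)) (_ : V ⊆ U ∧ K ⊆ ⋃₀ (↑V : Set (Set X))), (V.card : ℝ≥0∞)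

/-- `h_U(T,K) = limsup_{n→∞} (1/n) log N(U_0^{n-1},K)`. -/
def hCov (T : X → X) (U : Finset (Set X)) (K : Set X) : EReal :=
  Filter.atTop.limsup fun n : ℕ => ENNReal.log (covCard (dynCov T U n) K) / (n : EReal)

/-- Topological entropy of a subset via open covers: `h(T,K) = sup_U h_U(T,K)`. -/
def hCovSup [TopologicalSpace X] (T : X → X) (K : Set X) : EReal :=
  ⨆ (U : Finset (Set X)) (_ : (∀ A ∈ U, IsOpen A) ∧ ⋃₀ (↑U : Set (Set X)) = univ),
    hCov T U K

/-- The atom of the (finite) partition `P` containing `x`. -/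
def atomAt (P : Finset (Set X)) (x : X) : Set X := ⋃₀ {A | A ∈ P ∧ x ∈ A}

/-- `P` is a finite Borel partition. -/
def IsFinPartition [MeasurableSpace X] (P : Finset (Set X)) : Prop :=
  (∀ A ∈ P, MeasurableSet A) ∧ ⋃₀ (↑P : Set (Set X)) = univ ∧
    (↑P : Set (Set X)).Pairwise fun A B => Disjoint A B

/-- The Shannon entropy `H_μ(P) = ∑_{A ∈ P} -μ(A) log μ(A)` of a finite partition. -/
def partEnt [MeasurableSpace X] (μ : Measure X) (P : Finset (Set X)) : ℝ :=
  ∑ A ∈ P, -((μ A).toReal * Real.log (μ A).toReal)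

/-- The measure-theoretic (Kolmogorov–Sinai) entropy `h_μ(T)`: the supremum over finite Borel
partitions `P` of `lim_n (1/n) H_μ(P_0^{n-1})`; by subadditivity this limit is the infimum. -/
def ksEntropy [MeasurableSpace X] (T : X → X) (μ : Measure X) : EReal :=
  ⨆ (P : Finset (Set X)) (_ : IsFinPartition P),
    ⨅ n : ℕ, ((partEnt μ (dynCov T P (n + 1)) / (n + 1) : ℝ) : EReal)

/-- `π` is a principal factor map from `(X,T)` to `(Y,S)` : `h_μ(T) = h_{πμ}(S)` for every
`T`-invariant Borel probability measure `μ`. -/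
def IsPrincipal [MeasurableSpace X] [MeasurableSpace Y] (T : X → X) (S : Y → Y)
    (π : X → Y) : Prop :=
  ∀ μ : Measure X, IsProbabilityMeasure μ → Measure.map T μ = μ →
    ksEntropy T μ = ksEntropy S (Measure.map π μ)

/-- The relative topological entropy `h_top(T,X|π) = sup_{y ∈ Y} h(T, π^{-1}(y))`. -/
def relEnt [PseudoMetricSpace X] (T : X → X) (π : X → Y) : EReal :=
  ⨆ y : Y, subEnt T (π ⁻¹' {y})

/-- The canonical conversion `EReal → ℝ≥0∞` (`⊥` and negative reals go to `0`). -/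
def erealToENNReal (x : EReal) : ℝ≥0∞ := if x = ⊤ then ⊤ else ENNReal.ofReal x.toReal


section Covers

lemma mem_covJoin {U V : Finset (Set X)} {S : Set X} :
    S ∈ covJoin U V ↔ ∃ A ∈ U, ∃ B ∈ V, A ∩ B = S := by
  simp only [covJoin, Finset.mem_image, Finset.mem_product, Prod.exists, and_assoc,
    exists_and_left]

lemma covJoin_comm (U V : Finset (Set X)) : covJoin U V = covJoin V U := by
  ext S
  simp only [mem_covJoin]
  constructor <;> rintro ⟨A, hA, B, hB, rfl⟩ <;> exact ⟨B, hB, A, hA, inter_comm B A⟩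

lemma covJoin_assoc (U V W : Finset (Set X)) :
    covJoin (covJoin U V) W = covJoin U (covJoin V W) := by
  ext S
  simp only [mem_covJoin]
  constructor
  · rintro ⟨_, ⟨A, hA, B, hB, rfl⟩, C, hC, rfl⟩
    exact ⟨A, hA, B ∩ C, ⟨B, hB, C, hC, rfl⟩, (inter_assoc A B C).symm⟩
  · rintro ⟨A, hA, _, ⟨B, hB, C, hC, rfl⟩, rfl⟩
    exact ⟨A ∩ B, ⟨A, hA, B, hB, rfl⟩, C, hC, inter_assoc A B C⟩

/-- The pulled back family `f⁻¹U = {f⁻¹A : A ∈ U}`, the operation `T⁻¹` on covers. -/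
def preimageCov (f : X → Y) (U : Finset (Set Y)) : Finset (Set X) :=
  letI := Classical.decEq (Set X)
  U.image (f ⁻¹' ·)

lemma mem_preimageCov {f : X → Y} {U : Finset (Set Y)} {S : Set X} :
    S ∈ preimageCov f U ↔ ∃ A ∈ U, f ⁻¹' A = S := by
  simp only [preimageCov, Finset.mem_image]

lemma card_preimageCov_le (f : X → Y) (U : Finset (Set Y)) :
    (preimageCov f U).card ≤ U.card := by
  classical exact Finset.card_image_le

lemma sUnion_preimageCov (f : X → Y) (U : Finset (Set Y)) :
    ⋃₀ (↑(preimageCov f U) : Set (Set X)) = f ⁻¹' ⋃₀ ↑U := by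
  ext x
  simp [mem_preimageCov]

lemma preimageCov_covJoin (f : X → Y) (U V : Finset (Set Y)) :
    preimageCov f (covJoin U V) = covJoin (preimageCov f U) (preimageCov f V) := by
  ext S
  simp only [mem_preimageCov, mem_covJoin]
  constructor
  · rintro ⟨_, ⟨A, hA, B, hB, rfl⟩, rfl⟩
    exact ⟨_, ⟨A, hA, rfl⟩, _, ⟨B, hB, rfl⟩, rfl⟩
  · rintro ⟨_, ⟨A, hA, rfl⟩, _, ⟨B, hB, rfl⟩, rfl⟩
    exact ⟨_, ⟨A, hA, B, hB, rfl⟩, rfl⟩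

lemma preimageCov_preimageCov {Z : Type*} (f : X → Y) (g : Y → Z) (U : Finset (Set Z)) :
    preimageCov f (preimageCov g U) = preimageCov (g ∘ f) U := by
  classical exact Finset.image_image

lemma Refines.inter {K L : Set X} {U V : Finset (Set X)} (hK : Refines K U) (hL : Refines L V) :
    Refines (K ∩ L) (covJoin U V) := by
  obtain ⟨A, hA, hKA⟩ := hK
  obtain ⟨B, hB, hLB⟩ := hL
  exact ⟨A ∩ B, mem_covJoin.2 ⟨A, hA, B, hB, rfl⟩, inter_subset_inter hKA hLB⟩

lemma Refines.preimage {K : Set Y} {U : Finset (Set Y)} (hK : Refines K U) (f : X → Y) :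
    Refines (f ⁻¹' K) (preimageCov f U) := by
  obtain ⟨A, hA, hKA⟩ := hK
  exact ⟨f ⁻¹' A, mem_preimageCov.2 ⟨A, hA, rfl⟩, preimage_mono hKA⟩

lemma refines_left_of_mem_covJoin {U V : Finset (Set X)} {S : Set X} (hS : S ∈ covJoin U V) :
    Refines S U := by
  obtain ⟨A, hA, B, -, rfl⟩ := mem_covJoin.1 hS
  exact ⟨A, hA, inter_subset_left⟩

lemma refines_right_of_mem_covJoin {U V : Finset (Set X)} {S : Set X} (hS : S ∈ covJoin U V) :
    Refines S V :=
  refines_left_of_mem_covJoin (covJoin_comm U V ▸ hS)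

end Covers

section IteratedJoin

lemma dynCov_succ (T : X → X) (U : Finset (Set X)) (n : ℕ) :
    dynCov T U (n + 1) = covJoin (dynCov T U n) (preimageCov T^[n] U) :=
  rfl

lemma dynCov_succ' (T : X → X) (U : Finset (Set X)) (n : ℕ) :
    dynCov T U (n + 1) = covJoin U (preimageCov T (dynCov T U n)) := by
  induction n with
  | zero =>
    ext S
    simp [dynCov, mem_covJoin, mem_preimageCov]
  | succ n ih =>
    calc dynCov T U (n + 2)
        = covJoin (covJoin U (preimageCov T (dynCov T U n))) (preimageCov T^[n + 1] U) := by
          rw [dynCov_succ, ih]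
      _ = covJoin U (preimageCov T (covJoin (dynCov T U n) (preimageCov T^[n] U))) := by
          rw [covJoin_assoc, preimageCov_covJoin, preimageCov_preimageCov, Function.iterate_succ]
      _ = covJoin U (preimageCov T (dynCov T U (n + 1))) := by rw [dynCov_succ]

lemma refines_dynCov (T : X → X) {U V : Finset (Set X)} (hVU : ∀ B ∈ V, Refines B U) (n : ℕ) :
    ∀ S ∈ dynCov T V n, Refines S (dynCov T U n) := by
  induction n with
  | zero => exact fun S hS => ⟨S, hS, Subset.rfl⟩
  | succ n ih =>
    intro S hS
    rw [dynCov_succ, mem_covJoin] at hS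
    obtain ⟨S', hS', B', hB', rfl⟩ := hS
    obtain ⟨B, hB, rfl⟩ := mem_preimageCov.1 hB'
    exact (ih S' hS').inter ((hVU B hB).preimage T^[n])

lemma isOpen_of_mem_dynCov [TopologicalSpace X] {T : X → X} (hT : Continuous T)
    {U : Finset (Set X)} (hU : ∀ A ∈ U, IsOpen A) (n : ℕ) : ∀ S ∈ dynCov T U n, IsOpen S := by
  induction n with
  | zero => simp [dynCov]
  | succ n ih =>
    intro S hS
    rw [dynCov_succ, mem_covJoin] at hS
    obtain ⟨S', hS', B, hB, rfl⟩ := hS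
    obtain ⟨A, hA, rfl⟩ := mem_preimageCov.1 hB
    exact (ih S' hS').inter ((hU A hA).preimage (hT.iterate n))

end IteratedJoin

section CoveringNumber

lemma covCard_le {U V : Finset (Set X)} {K : Set X} (hVU : V ⊆ U)
    (hKV : K ⊆ ⋃₀ (↑V : Set (Set X))) : covCard U K ≤ V.card :=
  iInf₂_le V ⟨hVU, hKV⟩

lemma covCard_empty (U : Finset (Set X)) : covCard U ∅ = 0 := by
  simpa using covCard_le (Finset.empty_subset U) (empty_subset _)

lemma covCard_le_covCard_of_map {U : Finset (Set X)} {V : Finset (Set Y)} {K : Set X} {L : Set Y}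
    (g : Set Y → Set X) (hgU : ∀ B ∈ V, g B ∈ U)
    (hcover : ∀ W ⊆ V, L ⊆ ⋃₀ (↑W : Set (Set Y)) → K ⊆ ⋃₀ (g '' ↑W)) :
    covCard U K ≤ covCard V L := by
  classical
  refine le_iInf₂ fun W ⟨hWV, hLW⟩ => ?_
  calc covCard U K ≤ (W.image g).card :=
        covCard_le (Finset.image_subset_iff.2 fun B hB => hgU B (hWV hB))
          (by simpa only [Finset.coe_image] using hcover W hWV hLW)
    _ ≤ W.card := mod_cast Finset.card_image_le

lemma covCard_le_of_refines {U V : Finset (Set X)} (hVU : ∀ B ∈ V, Refines B U) (K : Set X) :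
    covCard U K ≤ covCard V K := by
  choose! g hgU hBg using hVU
  refine covCard_le_covCard_of_map g hgU fun W hWV hKW x hx => ?_
  obtain ⟨B, hB, hxB⟩ := hKW hx
  exact ⟨g B, mem_image_of_mem g hB, hBg B (hWV hB) hxB⟩

lemma covCard_preimageCov (f : X → Y) (U : Finset (Set Y)) (K : Set X) :
    covCard (preimageCov f U) K = covCard U (f '' K) := by
  apply le_antisymm
  · refine covCard_le_covCard_of_map (f ⁻¹' ·) (fun A hA => mem_preimageCov.2 ⟨A, hA, rfl⟩)
      fun W _ hKW x hx => ?_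
    obtain ⟨A, hA, hxA⟩ := hKW (mem_image_of_mem f hx)
    exact ⟨f ⁻¹' A, mem_image_of_mem _ hA, hxA⟩
  · choose! g hgU hg using fun B (hB : B ∈ preimageCov f U) => mem_preimageCov.1 hB
    refine covCard_le_covCard_of_map g hgU ?_
    rintro W hW hKW _ ⟨x, hx, rfl⟩
    obtain ⟨B, hB, hxB⟩ := hKW hx
    refine ⟨g B, mem_image_of_mem g hB, ?_⟩
    rwa [← hg B (hW hB)] at hxB

lemma covCard_covJoin_le_mul_card (U : Finset (Set X)) {V : Finset (Set X)} {K : Set X}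
    (hKV : K ⊆ ⋃₀ (↑V : Set (Set X))) :
    covCard (covJoin U V) K ≤ covCard U K * V.card := by
  classical
  rcases V.eq_empty_or_nonempty with rfl | hV
  · obtain rfl : K = ∅ := by simpa using hKV
    simp [covCard_empty]
  have hV₀ : (V.card : ℝ≥0∞) ≠ 0 := mod_cast hV.card_ne_zero
  rw [covCard.eq_def U K]
  simp_rw [ENNReal.iInf_mul_of_ne hV₀ (ENNReal.natCast_ne_top _)]
  refine le_iInf₂ fun W ⟨hWU, hKW⟩ => ?_
  have hsub : covJoin W V ⊆ covJoin U V := by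
    intro S hS
    obtain ⟨A, hA, B, hB, rfl⟩ := mem_covJoin.1 hS
    exact mem_covJoin.2 ⟨A, hWU hA, B, hB, rfl⟩
  have hcover : K ⊆ ⋃₀ (↑(covJoin W V) : Set (Set X)) := by
    intro x hx
    obtain ⟨A, hA, hxA⟩ := hKW hx
    obtain ⟨B, hB, hxB⟩ := hKV hx
    exact ⟨A ∩ B, mem_covJoin.2 ⟨A, hA, B, hB, rfl⟩, hxA, hxB⟩
  have hcard : (covJoin W V).card ≤ W.card * V.card :=
    Finset.card_image_le.trans_eq (Finset.card_product W V)
  exact (covCard_le hsub hcover).trans (mod_cast hcard)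

lemma covCard_dynCov_le_succ (T : X → X) (U : Finset (Set X)) (n : ℕ) (K : Set X) :
    covCard (dynCov T U n) K ≤ covCard (dynCov T U (n + 1)) K :=
  covCard_le_of_refines (fun _ hS => refines_left_of_mem_covJoin hS) K

lemma covCard_dynCov_image_le_succ (T : X → X) (U : Finset (Set X)) (n : ℕ) (K : Set X) :
    covCard (dynCov T U n) (T '' K) ≤ covCard (dynCov T U (n + 1)) K := by
  rw [← covCard_preimageCov, dynCov_succ']
  exact covCard_le_of_refines (fun _ hS => refines_right_of_mem_covJoin hS) K

lemma covCard_dynCov_succ_le (T : X → X) {U : Finset (Set X)}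
    (hU : ⋃₀ (↑U : Set (Set X)) = univ) (n : ℕ) (K : Set X) :
    covCard (dynCov T U (n + 1)) K ≤ covCard (dynCov T U n) K * U.card := by
  have hcover : K ⊆ ⋃₀ (↑(preimageCov T^[n] U) : Set (Set X)) := by
    simp [sUnion_preimageCov, hU]
  refine (covCard_covJoin_le_mul_card (dynCov T U n) hcover).trans ?_
  gcongr _ * ?_
  exact mod_cast card_preimageCov_le T^[n] U

lemma covCard_dynCov_succ_le_image (T : X → X) {U : Finset (Set X)} {K : Set X}
    (hKU : K ⊆ ⋃₀ (↑U : Set (Set X))) (n : ℕ) :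
    covCard (dynCov T U (n + 1)) K ≤ covCard (dynCov T U n) (T '' K) * U.card := by
  rw [← covCard_preimageCov, dynCov_succ', covJoin_comm]
  exact covCard_covJoin_le_mul_card _ hKU

lemma upperSemicontinuous_covCard {Z : Type*} [TopologicalSpace Z] [TopologicalSpace X]
    {F : Z → Set X} (hF : UpperHemicontinuous F) {U : Finset (Set X)} (hU : ∀ A ∈ U, IsOpen A) :
    UpperSemicontinuous fun z => covCard U (F z) := by
  intro z c hc
  obtain ⟨V, ⟨hVU, hzV⟩, hVc⟩ :
      ∃ V, ∃ (_ : V ⊆ U ∧ F z ⊆ ⋃₀ (↑V : Set (Set X))), (V.card : ℝ≥0∞) < c := by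
    simpa only [covCard, iInf_lt_iff] using hc
  have hV : IsOpen (⋃₀ (↑V : Set (Set X))) := isOpen_sUnion fun A hA => hU A (hVU hA)
  filter_upwards [hF.forall_isOpen z _ hV hzV] with z' hz'
  exact (covCard_le hVU hz').trans_lt hVc

end CoveringNumber

section CoverEntropy

lemma hCov_le_of_covCard_le_mul {T : X → X} {S : Y → Y} {U : Finset (Set X)}
    {V : Finset (Set Y)} {K : Set X} {L : Set Y} {c : ℝ≥0∞} (hc : c ≠ ∞)
    (h : ∀ n, covCard (dynCov T U n) K ≤ covCard (dynCov S V n) L * c) :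
    hCov T U K ≤ hCov S V L :=
  ExpGrowth.expGrowthSup_le_of_eventually_le hc
    (Eventually.of_forall fun n => (h n).trans_eq (mul_comm _ c))

lemma hCov_le_of_refines (T : X → X) {U V : Finset (Set X)} (hVU : ∀ B ∈ V, Refines B U)
    (K : Set X) : hCov T U K ≤ hCov T V K :=
  ExpGrowth.expGrowthSup_monotone fun n => covCard_le_of_refines (refines_dynCov T hVU n) K

theorem hCov_image (T : X → X) {U : Finset (Set X)} (hU : ⋃₀ (↑U : Set (Set X)) = univ)
    (K : Set X) : hCov T U (T '' K) = hCov T U K := by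
  have hc := ENNReal.natCast_ne_top U.card
  apply le_antisymm
  · exact hCov_le_of_covCard_le_mul hc fun n =>
      (covCard_dynCov_image_le_succ T U n K).trans (covCard_dynCov_succ_le T hU n K)
  · exact hCov_le_of_covCard_le_mul hc fun n =>
      (covCard_dynCov_le_succ T U n K).trans
        (covCard_dynCov_succ_le_image T (hU ▸ subset_univ K) n)

theorem hCovSup_image [TopologicalSpace X] (T : X → X) (K : Set X) :
    hCovSup T (T '' K) = hCovSup T K :=
  iSup_congr fun _ => iSup_congr fun hU => hCov_image T hU.2 K

theorem measurable_hCov {Z : Type*} [TopologicalSpace Z] [MeasurableSpace Z]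
    [OpensMeasurableSpace Z] [TopologicalSpace X] {F : Z → Set X} (hF : UpperHemicontinuous F)
    {T : X → X} (hT : Continuous T) {U : Finset (Set X)} (hU : ∀ A ∈ U, IsOpen A) :
    Measurable fun z => hCov T U (F z) := by
  refine Measurable.limsup fun n => ?_
  have hcard : Measurable fun z => covCard (dynCov T U n) (F z) :=
    (upperSemicontinuous_covCard hF (isOpen_of_mem_dynCov hT hU n)).measurable
  have hmono : Monotone fun x : ℝ≥0∞ => ENNReal.log x / (n : EReal) :=
    (EReal.monotone_div_right_of_nonneg n.cast_nonneg').comp ENNReal.log_monotone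
  exact hmono.measurable.comp hcard

end CoverEntropy

section CountablyManyCovers

lemma countable_finset_coe_subset {α : Type*} {s : Set α} (hs : s.Countable) :
    {t : Finset α | ↑t ⊆ s}.Countable := by
  have h := (countable_ofPred_finite_subset hs).preimage (Finset.coe_injective (α := α))
  simpa only [preimage_ofPred_eq, Finset.finite_toSet, true_and] using h

variable [TopologicalSpace X] [CompactSpace X] {B : Set (Set X)}

lemma exists_basis_cover_refines (hB : TopologicalSpace.IsTopologicalBasis B)
    {U : Finset (Set X)} (hUo : ∀ A ∈ U, IsOpen A) (hUc : ⋃₀ (↑U : Set (Set X)) = univ) :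
    ∃ V : Finset (Set X), ↑V ⊆ B ∧ ⋃₀ (↑V : Set (Set X)) = univ ∧ ∀ A ∈ V, Refines A U := by
  have hcover : univ ⊆ ⋃ A ∈ {A ∈ B | Refines A U}, A := by
    intro x _
    obtain ⟨A, hA, hxA⟩ : x ∈ ⋃₀ (↑U : Set (Set X)) := hUc ▸ mem_univ x
    obtain ⟨A', hA', hxA', hA'A⟩ := hB.exists_subset_of_mem_open hxA (hUo A hA)
    exact mem_iUnion₂.2 ⟨A', ⟨hA', A, hA, hA'A⟩, hxA'⟩
  obtain ⟨V, hV, hVfin, hVc⟩ :=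
    isCompact_univ.elim_finite_subcover_image (fun A hA => hB.isOpen hA.1) hcover
  lift V to Finset (Set X) using hVfin
  refine ⟨V, fun A hA => (hV hA).1, ?_, fun A hA => (hV hA).2⟩
  rwa [sUnion_eq_biUnion, ← univ_subset_iff]

lemma hCovSup_eq_biSup_basis (hB : TopologicalSpace.IsTopologicalBasis B) (T : X → X)
    (K : Set X) :
    hCovSup T K =
      ⨆ V ∈ {V : Finset (Set X) | ↑V ⊆ B ∧ ⋃₀ (↑V : Set (Set X)) = univ}, hCov T V K := by
  apply le_antisymm
  · refine iSup₂_le fun U ⟨hUo, hUc⟩ => ?_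
    obtain ⟨V, hVB, hVc, hVU⟩ := exists_basis_cover_refines hB hUo hUc
    exact le_iSup₂_of_le V ⟨hVB, hVc⟩ (hCov_le_of_refines T hVU K)
  · exact iSup₂_le fun V ⟨hVB, hVc⟩ =>
      le_iSup₂_of_le V ⟨fun A hA => hB.isOpen (hVB hA), hVc⟩ le_rfl

theorem measurable_hCovSup [SecondCountableTopology X] {Z : Type*} [TopologicalSpace Z]
    [MeasurableSpace Z] [OpensMeasurableSpace Z] {F : Z → Set X} (hF : UpperHemicontinuous F)
    {T : X → X} (hT : Continuous T) : Measurable fun z => hCovSup T (F z) := by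
  have hB := TopologicalSpace.isBasis_countableBasis X
  have hcountable : {V : Finset (Set X) | ↑V ⊆ TopologicalSpace.countableBasis X ∧
      ⋃₀ (↑V : Set (Set X)) = univ}.Countable :=
    (countable_finset_coe_subset (TopologicalSpace.countable_countableBasis X)).mono
      fun _ hV => hV.1
  simp_rw [hCovSup_eq_biSup_basis hB T]
  exact Measurable.biSup _ hcountable fun V hV =>
    measurable_hCov hF hT fun A hA => hB.isOpen (hV.1 hA)

end CountablyManyCovers

lemma upperHemicontinuous_nonemptyCompacts_coe [TopologicalSpace X] :
    UpperHemicontinuous ((↑) : TopologicalSpace.NonemptyCompacts X → Set X) :=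
  .of_forall_isOpen fun _ _ hO hK =>
    (TopologicalSpace.NonemptyCompacts.isOpen_subsets_of_isOpen hO).mem_nhds hK

/-- `NonemptyCompacts X` carries the Vietoris topology, which for metric `X` is the topology of the
Hausdorff metric. -/
theorem entropy_hyperfunction_measurable_general {X : Type*} [TopologicalSpace X] [CompactSpace X]
    [SecondCountableTopology X] (T : X → X) (hT : Continuous T) (U : Finset (Set X))
    (hUo : ∀ A ∈ U, IsOpen A) (hUc : ⋃₀ (↑U : Set (Set X)) = univ) :
    (∀ K : Set X, hCov T U (T '' K) = hCov T U K) ∧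
    (∀ K : TopologicalSpace.NonemptyCompacts X,
      hCovSup T (T '' (K : Set X)) = hCovSup T (K : Set X)) ∧
    (@Measurable (TopologicalSpace.NonemptyCompacts X) EReal
      (borel (TopologicalSpace.NonemptyCompacts X)) _
      fun K : TopologicalSpace.NonemptyCompacts X => hCov T U (K : Set X)) ∧
    (@Measurable (TopologicalSpace.NonemptyCompacts X) EReal
      (borel (TopologicalSpace.NonemptyCompacts X)) _
      fun K : TopologicalSpace.NonemptyCompacts X => hCovSup T (K : Set X)) := by
  borelize (TopologicalSpace.NonemptyCompacts X)
  have hcoe := upperHemicontinuous_nonemptyCompacts_coe (X := X)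
  exact ⟨hCov_image T hUc, fun K => hCovSup_image T K, measurable_hCov hcoe hT hUo,
    measurable_hCovSup hcoe hT⟩

/-- Invariance and Borel measurability of the entropy hyper-function on
the hyperspace `2^X` of non-empty compact subsets (with the Hausdorff metric):
(1) `h_U(T,K) = h_U(T,TK)` and `H(T̂K) = H(K)`; (2) `K ↦ h_U(T,K)` is Borel measurable;
(3) the entropy hyper-function `H(K) = h(T,K)` is Borel measurable. -/
theorem entropy_hyperfunction_measurable {X : Type*} [MetricSpace X] [CompactSpace X]
    (T : X → X) (hT : Continuous T) (U : Finset (Set X))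
    (hUo : ∀ A ∈ U, IsOpen A) (hUc : ⋃₀ (↑U : Set (Set X)) = univ) :
    (∀ K : Set X, hCov T U (T '' K) = hCov T U K) ∧
    (∀ K : TopologicalSpace.NonemptyCompacts X,
      hCovSup T (T '' (K : Set X)) = hCovSup T (K : Set X)) ∧
    (@Measurable (TopologicalSpace.NonemptyCompacts X) EReal
      (borel (TopologicalSpace.NonemptyCompacts X)) _
      fun K : TopologicalSpace.NonemptyCompacts X => hCov T U (K : Set X)) ∧
    (@Measurable (TopologicalSpace.NonemptyCompacts X) EReal
      (borel (TopologicalSpace.NonemptyCompacts X)) _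
      fun K : TopologicalSpace.NonemptyCompacts X => hCovSup T (K : Set X)) :=
  entropy_hyperfunction_measurable_general T hT U hUo hUc
end
end

section
/- Let π : (X,T) → (Y,S) be a factor map between general topological dynamical systems and let ν be an ergodic S-invariant Borel probability measure on Y. Then there exists a countable compact subset K ⊆ X with h(T,K) = h(T,X|ν), where h(T,X|ν) = ∫_Y h(T, π^{−1}(y)) dν(y). -/
open Filter Set Metric MeasureTheory
open scoped ENNReal Topology

noncomputable section

variable {X Y : Type*}

/-!
The map `T` sends the fiber over `y` into the fiber over `S y`, and a compact set does not lose
entropy under `T`: at scale `ε` its entropy is carried by a piece of diameter at most `ε`, whose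
points are never separated at time `0`. So fiber entropy does not decrease along `S`, and ergodicity
makes it almost everywhere constant; it is measurable because the points of `Y` whose fiber contains
a separated family of a given size form a projection of a `σ`-compact set. It then suffices to find
in a nonempty compact set `C` a countable compact subset of the same entropy.

The entropy of a union is the maximum of the entropies, both at a fixed scale and in the limit, so
by compactness each of them is concentrated in every neighbourhood of some point of `C`. At a fixed
scale, large finite separated sets shrinking to such a point, together with the point, form a
countable compact set carrying the entropy of that scale up to an arbitrarily small loss. Countable
compact sets of this kind whose entropies tend to that of `C`, shrinking to a point at which the
limit entropy concentrates, give the required subset.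
-/

section CompactSets

theorem isCompact_insert_iUnion_of_tendsto_smallSets {Z ι : Type*} [TopologicalSpace Z] {z : Z}
    {A : ι → Set Z} (hA : ∀ i, IsCompact (A i)) (hAz : Tendsto A cofinite (𝓝 z).smallSets) :
    IsCompact (insert z (⋃ i, A i)) := by
  refine isCompact_iff_ultrafilter_le_nhds'.2 fun F hF ↦ ?_
  by_cases hFz : (F : Filter Z) ≤ 𝓝 z
  · exact ⟨z, mem_insert _ _, hFz⟩
  obtain ⟨U, hU, hUF⟩ := Filter.not_le.1 hFz
  have hfin : {i | ¬ A i ⊆ U}.Finite := tendsto_smallSets_iff.1 hAz U hU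
  have hmem : (⋃ i ∈ {i | ¬ A i ⊆ U}, A i) ∈ F := by
    filter_upwards [hF, Ultrafilter.compl_mem_iff_notMem.2 hUF]
    rintro a (rfl | ha) haU
    · exact absurd (mem_of_mem_nhds hU) haU
    · obtain ⟨i, hi⟩ := mem_iUnion.1 ha
      exact mem_biUnion (fun hiU : A i ⊆ U ↦ haU (hiU hi)) hi
  obtain ⟨i, -, hi⟩ := (Ultrafilter.finite_biUnion_mem_iff hfin).1 hmem
  obtain ⟨a, ha, hFa⟩ := (hA i).ultrafilter_le_nhds' F hi
  exact ⟨a, mem_insert_of_mem _ (mem_iUnion_of_mem i ha), hFa⟩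

theorem exists_mem_forall_nhds_eq_of_isCompact {Z β : Type*} [TopologicalSpace Z] [LinearOrder β]
    {φ : Set Z → β} (hmono : Monotone φ) (hunion : ∀ s t, φ (s ∪ t) ≤ max (φ s) (φ t))
    {C : Set Z} (hC : IsCompact C) (hempty : φ ∅ < φ C) :
    ∃ z ∈ C, ∀ U ∈ 𝓝 z, φ (C ∩ U) = φ C := by
  by_contra! hne
  have hlt : φ (C ∩ C) < φ C := by
    refine hC.induction_on (p := fun s ↦ φ (C ∩ s) < φ C) (by rwa [inter_empty])
      (fun s t hst ht ↦ (hmono (inter_subset_inter_right C hst)).trans_lt ht)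
      (fun s t hs ht ↦ ?_) (fun z hz ↦ ?_)
    · rw [inter_union_distrib_left]
      exact (hunion _ _).trans_lt (max_lt hs ht)
    · obtain ⟨U, hU, hUC⟩ := hne z hz
      exact ⟨U, mem_nhdsWithin_of_mem_nhds hU, (hmono inter_subset_left).lt_of_ne hUC⟩
  rw [inter_self] at hlt
  exact hlt.false

theorem isSigmaCompact_inter_of_isOpen {Z : Type*} [PseudoEMetricSpace Z] {s U : Set Z}
    (hs : IsSigmaCompact s) (hU : IsOpen U) : IsSigmaCompact (s ∩ U) := by
  obtain ⟨K, hK, rfl⟩ := hs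
  obtain ⟨F, hF, -, rfl, -⟩ := hU.exists_iUnion_isClosed
  simp only [iUnion_inter, inter_iUnion]
  exact isSigmaCompact_iUnion _ fun k ↦
    isSigmaCompact_iUnion_of_isCompact _ fun l ↦ (hK l).inter_right (hF k)

theorem measurableSet_of_isSigmaCompact {Z : Type*} [TopologicalSpace Z] [T2Space Z]
    [MeasurableSpace Z] [OpensMeasurableSpace Z] {s : Set Z} (hs : IsSigmaCompact s) :
    MeasurableSet s := by
  obtain ⟨K, hK, rfl⟩ := hs
  exact .iUnion fun k ↦ (hK k).measurableSet

end CompactSets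

section SeparatedSets

variable [PseudoMetricSpace X] {T : X → X} {n : ℕ} {ε δ : ℝ} {A B K : Set X}

theorem card_le_sepMaxCard {E : Finset X} (hEK : ↑E ⊆ K) (hE : IsSep T n ε (E : Set X)) :
    (E.card : ℝ≥0∞) ≤ sepMaxCard T n ε K :=
  le_iSup₂_of_le E ⟨hEK, hE⟩ le_rfl

theorem lt_sepMaxCard_iff {c : ℝ≥0∞} :
    c < sepMaxCard T n ε K ↔
      ∃ E : Finset X, (↑E ⊆ K ∧ IsSep T n ε (E : Set X)) ∧ c < E.card := by
  simp only [sepMaxCard, lt_iSup_iff, exists_prop]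

theorem sepMaxCard_mono (h : A ⊆ B) : sepMaxCard T n ε A ≤ sepMaxCard T n ε B :=
  iSup₂_le fun _ hE ↦ card_le_sepMaxCard (hE.1.trans h) hE.2

theorem sepMaxCard_anti (h : ε ≤ δ) : sepMaxCard T n δ K ≤ sepMaxCard T n ε K :=
  iSup₂_le fun _ hE ↦ card_le_sepMaxCard hE.1 <|
    hE.2.mono' fun _ _ ⟨i, hi, hd⟩ ↦ ⟨i, hi, h.trans_lt hd⟩

theorem sepMaxCard_union_le :
    sepMaxCard T n ε (A ∪ B) ≤ sepMaxCard T n ε A + sepMaxCard T n ε B := by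
  classical
  refine iSup₂_le fun E ⟨hEAB, hE⟩ ↦ ?_
  rw [← E.card_filter_add_card_filter_not (· ∈ A), Nat.cast_add]
  refine add_le_add (card_le_sepMaxCard ?_ (hE.mono (E.filter_subset _)))
    (card_le_sepMaxCard ?_ (hE.mono (E.filter_subset _)))
  · exact fun x hx ↦ (Finset.mem_filter.1 hx).2
  · intro x hx
    obtain ⟨hxE, hxA⟩ := Finset.mem_filter.1 hx
    exact (hEAB hxE).resolve_left hxA

theorem sepMaxCard_empty : sepMaxCard T n ε ∅ = 0 := by
  refine nonpos_iff_eq_zero.1 (iSup₂_le fun E hE ↦ ?_)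
  simp [Finset.coe_eq_empty.1 (subset_empty_iff.1 hE.1)]

theorem one_le_sepMaxCard (hK : K.Nonempty) : 1 ≤ sepMaxCard T n ε K := by
  obtain ⟨x, hx⟩ := hK
  simpa using card_le_sepMaxCard (T := T) (n := n) (ε := ε) (E := {x}) (by simpa using hx)
    (by simp [IsSep])

theorem sepMaxCard_le_sepMaxCard_image (hK : ∀ x ∈ K, ∀ y ∈ K, dist x y ≤ ε) :
    sepMaxCard T n ε K ≤ sepMaxCard T n ε (T '' K) := by
  classical
  refine iSup₂_le fun E ⟨hEK, hE⟩ ↦ ?_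
  have hsep : (E : Set X).Pairwise
      fun x y ↦ ∃ i < n, ε < dist (T^[i] (T x)) (T^[i] (T y)) := by
    intro x hx y hy hxy
    obtain ⟨i, hin, hi⟩ := hE hx hy hxy
    cases i with
    | zero => exact absurd hi (hK x (hEK hx) y (hEK hy)).not_gt
    | succ i => exact ⟨i, by lia, hi⟩
  have hinj : InjOn T E := by
    intro x hx y hy hTxy
    by_contra hxy
    obtain ⟨i, -, hi⟩ := hsep hx hy hxy
    rw [hTxy, dist_self] at hi
    exact hi.not_ge (dist_nonneg.trans (hK x (hEK hx) y (hEK hy)))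
  rw [← Finset.card_image_of_injOn hinj]
  apply card_le_sepMaxCard <;> rw [Finset.coe_image]
  · exact image_mono hEK
  · exact hinj.pairwise_image.2 hsep

end SeparatedSets

section Entropy

variable [PseudoMetricSpace X] {T : X → X} {ε δ : ℝ} {A B K : Set X}

theorem sepEnt_eq_expGrowthSup :
    sepEnt T ε K = ExpGrowth.expGrowthSup fun n ↦ sepMaxCard T n ε K := rfl

theorem sepEnt_mono (h : A ⊆ B) : sepEnt T ε A ≤ sepEnt T ε B :=
  ExpGrowth.expGrowthSup_monotone fun _ ↦ sepMaxCard_mono h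

theorem sepEnt_anti (h : ε ≤ δ) : sepEnt T δ K ≤ sepEnt T ε K :=
  ExpGrowth.expGrowthSup_monotone fun _ ↦ sepMaxCard_anti h

theorem sepEnt_union_le : sepEnt T ε (A ∪ B) ≤ max (sepEnt T ε A) (sepEnt T ε B) := by
  simp only [sepEnt_eq_expGrowthSup]
  rw [← ExpGrowth.expGrowthSup_add]
  exact ExpGrowth.expGrowthSup_monotone fun _ ↦ sepMaxCard_union_le

theorem sepEnt_empty : sepEnt T ε ∅ = ⊥ := by
  simp only [sepEnt_eq_expGrowthSup, sepMaxCard_empty]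
  exact ExpGrowth.expGrowthSup_zero

theorem sepEnt_nonneg (hK : K.Nonempty) : 0 ≤ sepEnt T ε K := by
  rw [← ExpGrowth.expGrowthSup_const one_ne_zero ENNReal.one_ne_top]
  exact ExpGrowth.expGrowthSup_monotone fun _ ↦ one_le_sepMaxCard hK

theorem sepEnt_le_subEnt (hε : 0 < ε) : sepEnt T ε K ≤ subEnt T K :=
  le_iSup₂_of_le ε hε le_rfl

theorem lt_subEnt_iff {c : EReal} : c < subEnt T K ↔ ∃ ε > 0, c < sepEnt T ε K := by
  simp only [subEnt, lt_iSup_iff, exists_prop, gt_iff_lt]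

theorem subEnt_eq_iSup_nat : subEnt T K = ⨆ m : ℕ, sepEnt T (1 / (m + 1)) K := by
  refine le_antisymm (iSup₂_le fun ε hε ↦ ?_)
    (iSup_le fun m ↦ sepEnt_le_subEnt Nat.one_div_pos_of_nat)
  obtain ⟨m, hm⟩ := exists_nat_one_div_lt hε
  exact le_iSup_of_le m (sepEnt_anti hm.le)

theorem subEnt_mono (h : A ⊆ B) : subEnt T A ≤ subEnt T B :=
  iSup₂_mono fun _ _ ↦ sepEnt_mono h

theorem subEnt_union_le : subEnt T (A ∪ B) ≤ max (subEnt T A) (subEnt T B) :=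
  iSup₂_le fun _ hε ↦
    sepEnt_union_le.trans (max_le_max (sepEnt_le_subEnt hε) (sepEnt_le_subEnt hε))

theorem subEnt_empty : subEnt T ∅ = ⊥ := by
  simp only [subEnt, sepEnt_empty, iSup_bot]

theorem subEnt_nonneg (hK : K.Nonempty) : 0 ≤ subEnt T K :=
  (sepEnt_nonneg hK).trans (sepEnt_le_subEnt one_pos)

theorem exists_mem_forall_nhds_sepEnt_inter_eq (hK : IsCompact K) (hpos : ⊥ < sepEnt T ε K) :
    ∃ x ∈ K, ∀ U ∈ 𝓝 x, sepEnt T ε (K ∩ U) = sepEnt T ε K :=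
  exists_mem_forall_nhds_eq_of_isCompact (fun _ _ ↦ sepEnt_mono) (fun _ _ ↦ sepEnt_union_le) hK
    (by rwa [sepEnt_empty])

theorem exists_mem_forall_nhds_subEnt_inter_eq (hK : IsCompact K) (hpos : ⊥ < subEnt T K) :
    ∃ x ∈ K, ∀ U ∈ 𝓝 x, subEnt T (K ∩ U) = subEnt T K :=
  exists_mem_forall_nhds_eq_of_isCompact (fun _ _ ↦ subEnt_mono) (fun _ _ ↦ subEnt_union_le) hK
    (by rwa [subEnt_empty])

theorem sepEnt_le_sepEnt_image (hε : 0 < ε) (hK : IsCompact K) :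
    sepEnt T ε K ≤ sepEnt T ε (T '' K) := by
  obtain hbot | hpos := eq_bot_or_bot_lt (sepEnt T ε K)
  · exact hbot.trans_le bot_le
  obtain ⟨x, -, hx⟩ := exists_mem_forall_nhds_sepEnt_inter_eq hK hpos
  have hdist : ∀ a ∈ K ∩ ball x (ε / 2), ∀ b ∈ K ∩ ball x (ε / 2), dist a b ≤ ε := by
    intro a ha b hb
    linarith [dist_triangle_right a b x, mem_ball.1 ha.2, mem_ball.1 hb.2]
  calc sepEnt T ε K
      = sepEnt T ε (K ∩ ball x (ε / 2)) := (hx _ (ball_mem_nhds x (by positivity))).symm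
    _ ≤ sepEnt T ε (T '' (K ∩ ball x (ε / 2))) :=
      ExpGrowth.expGrowthSup_monotone fun _ ↦ sepMaxCard_le_sepMaxCard_image hdist
    _ ≤ sepEnt T ε (T '' K) := sepEnt_mono (image_mono inter_subset_left)

theorem subEnt_le_subEnt_image (hK : IsCompact K) : subEnt T K ≤ subEnt T (T '' K) :=
  iSup₂_mono fun _ hε ↦ sepEnt_le_sepEnt_image hε hK

end Entropy

section CountableSubset

variable [PseudoMetricSpace X] {T : X → X} {ε : ℝ} {c : EReal} {C : Set X}

theorem frequently_exists_isSep_of_lt_sepEnt (hc : c < sepEnt T ε C) :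
    ∃ᶠ n : ℕ in atTop, ∃ E : Finset X, ↑E ⊆ C ∧ IsSep T n ε (E : Set X) ∧
      EReal.exp (c * n) ≤ E.card := by
  refine ((frequently_lt_of_lt_limsup (h := hc)).and_eventually (eventually_gt_atTop 0)).mono ?_
  rintro n ⟨hn, hn0⟩
  have hexp : EReal.exp (c * n) < sepMaxCard T n ε C := by
    rw [← ENNReal.log_lt_log_iff, EReal.log_exp]
    exact (EReal.lt_div_iff (by exact_mod_cast hn0) (EReal.natCast_ne_top n)).1 hn
  obtain ⟨E, ⟨hEC, hE⟩, hcard⟩ := lt_sepMaxCard_iff.1 hexp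
  exact ⟨E, hEC, hE, hcard.le⟩

theorem exists_countable_isCompact_le_sepEnt (hC : IsCompact C) (hc : c < sepEnt T ε C) :
    ∃ K ⊆ C, K.Countable ∧ IsCompact K ∧ c ≤ sepEnt T ε K := by
  obtain ⟨x, hxC, hx⟩ := exists_mem_forall_nhds_sepEnt_inter_eq hC (bot_le.trans_lt hc)
  obtain ⟨U, hU⟩ := (𝓝 x).exists_antitone_basis
  have hfreq (k : ℕ) := frequently_atTop.1
    (frequently_exists_isSep_of_lt_sepEnt ((hx (U k) (hU.mem k)).symm ▸ hc)) k
  choose n hn E hEC hEsep hEcard using hfreq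
  have hEK (k : ℕ) : (E k : Set X) ⊆ insert x (⋃ k, (E k : Set X)) :=
    (subset_iUnion (fun k ↦ (E k : Set X)) k).trans (subset_insert _ _)
  refine ⟨insert x (⋃ k, E k), ?_, ?_, ?_, ?_⟩
  · exact insert_subset hxC (iUnion_subset fun k ↦ (hEC k).trans inter_subset_left)
  · exact (countable_iUnion fun k ↦ (E k).countable_toSet).insert x
  · refine isCompact_insert_iUnion_of_tendsto_smallSets (fun k ↦ (E k).finite_toSet.isCompact) ?_
    rw [Nat.cofinite_eq_atTop]
    exact hU.tendsto_smallSets.smallSets_mono (.of_forall fun k ↦ (hEC k).trans inter_subset_right)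
  · exact Frequently.le_expGrowthSup <| frequently_atTop.2 fun k ↦
      ⟨n k, hn k, (hEcard k).trans (card_le_sepMaxCard (hEK k) (hEsep k))⟩

theorem exists_countable_isCompact_subEnt_eq (hC : IsCompact C) (hne : C.Nonempty) :
    ∃ K ⊆ C, K.Countable ∧ IsCompact K ∧ subEnt T K = subEnt T C := by
  have hpos : ⊥ < subEnt T C := EReal.bot_lt_zero.trans_le (subEnt_nonneg hne)
  obtain ⟨u, -, hu, hulim⟩ := exists_seq_strictMono_tendsto' hpos
  obtain ⟨z, hzC, hz⟩ := exists_mem_forall_nhds_subEnt_inter_eq hC hpos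
  obtain ⟨U, hUcl, hU⟩ := (closed_nhds_basis z).exists_antitone_subbasis
  have hscale (k : ℕ) : ∃ ε > 0, u k < sepEnt T ε (C ∩ U k) :=
    lt_subEnt_iff.1 ((hu k).2.trans_eq (hz _ (hUcl k).1).symm)
  choose ε hε hlt using hscale
  choose K hKC hKcount hKcomp hKent using fun k ↦
    exists_countable_isCompact_le_sepEnt (hC.inter_right (hUcl k).2) (hlt k)
  have hsub : insert z (⋃ k, K k) ⊆ C :=
    insert_subset hzC (iUnion_subset fun k ↦ (hKC k).trans inter_subset_left)
  refine ⟨insert z (⋃ k, K k), hsub, ?_, ?_, le_antisymm (subEnt_mono hsub) ?_⟩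
  · exact (countable_iUnion hKcount).insert z
  · refine isCompact_insert_iUnion_of_tendsto_smallSets hKcomp ?_
    rw [Nat.cofinite_eq_atTop]
    exact hU.tendsto_smallSets.smallSets_mono (.of_forall fun k ↦ (hKC k).trans inter_subset_right)
  · refine le_of_tendsto' hulim fun k ↦ ?_
    calc u k ≤ sepEnt T (ε k) (K k) := hKent k
      _ ≤ subEnt T (K k) := sepEnt_le_subEnt (hε k)
      _ ≤ subEnt T (insert z (⋃ k, K k)) :=
        subEnt_mono ((subset_iUnion K k).trans (subset_insert _ _))

end CountableSubset

section Measurability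

/-- The `(n, ε)`-separated families in `X` indexed by `ι`. Unlike the finite separated sets of
`IsSep`, they form a subset of a topological space, which is open when `T` is continuous. -/
def sepFamilies [PseudoMetricSpace X] (T : X → X) (n : ℕ) (ε : ℝ) (ι : Type*) : Set (ι → X) :=
  {g | Pairwise fun i j ↦ ∃ m < n, ε < dist (T^[m] (g i)) (T^[m] (g j))}

variable [PseudoMetricSpace X] {T : X → X} {n : ℕ} {ε : ℝ}

theorem isOpen_sepFamilies (hT : Continuous T) {ι : Type*} [Finite ι] :
    IsOpen (sepFamilies T n ε ι) := by
  simp only [sepFamilies, Pairwise, ofPred_forall, ofPred_exists, ofPred_and]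
  refine isOpen_iInter_of_finite fun i ↦ isOpen_iInter_of_finite fun j ↦
    isOpen_iInter_of_finite fun _ ↦ isOpen_iUnion fun m ↦ isOpen_const.inter ?_
  have hdist : Continuous fun g : ι → X ↦ dist (T^[m] (g i)) (T^[m] (g j)) := by
    have := hT.iterate m
    fun_prop
  exact isOpen_lt continuous_const hdist

theorem injective_of_mem_sepFamilies (hε : 0 ≤ ε) {ι : Type*} {g : ι → X}
    (hg : g ∈ sepFamilies T n ε ι) : Function.Injective g := by
  intro i j hij
  by_contra hne
  obtain ⟨m, -, hm⟩ := hg hne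
  rw [hij, dist_self] at hm
  exact hm.not_ge hε

theorem lt_sepMaxCard_iff_exists_sepFamilies (hε : 0 ≤ ε) {K : Set X} {c : ℝ≥0∞} :
    c < sepMaxCard T n ε K ↔
      ∃ k : ℕ, c < k ∧ ((univ.pi fun _ : Fin k ↦ K) ∩ sepFamilies T n ε (Fin k)).Nonempty := by
  classical
  rw [lt_sepMaxCard_iff]
  constructor
  · rintro ⟨E, ⟨hEK, hE⟩, hc⟩
    refine ⟨E.card, hc, fun i ↦ E.equivFin.symm i, fun i _ ↦ hEK (E.equivFin.symm i).2,
      fun i j hij ↦ hE (E.equivFin.symm i).2 (E.equivFin.symm j).2 ?_⟩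
    exact fun h ↦ hij (E.equivFin.symm.injective (Subtype.ext h))
  · rintro ⟨k, hc, g, hgK, hg⟩
    have hinj := injective_of_mem_sepFamilies hε hg
    refine ⟨Finset.univ.image g, ?_, ?_⟩
    · simp only [Finset.coe_image, Finset.coe_univ, IsSep]
      exact ⟨image_subset_iff.2 fun i _ ↦ hgK i (mem_univ i),
        hinj.injOn.pairwise_image.2 (hg.set_pairwise _)⟩
    · rwa [Finset.card_image_of_injective _ hinj, Finset.card_fin]

variable [SigmaCompactSpace X] [TopologicalSpace Y] [T2Space Y] [MeasurableSpace Y]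
  [OpensMeasurableSpace Y] {π : X → Y}

theorem measurableSet_pi_fiber_inter_nonempty (hπ : Continuous π) {ι : Type*} [Finite ι]
    {V : Set (ι → X)} (hV : IsOpen V) :
    MeasurableSet {y | ((univ.pi fun _ : ι ↦ π ⁻¹' {y}) ∩ V).Nonempty} := by
  have := Fintype.ofFinite ι
  obtain _ | ⟨⟨i₀⟩⟩ := isEmpty_or_nonempty ι
  · have hpi (y : Y) : (univ.pi fun _ : ι ↦ π ⁻¹' {y}) = univ :=
      eq_univ_of_forall fun _ i ↦ isEmptyElim i
    simp only [hpi]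
    exact .const _
  have hclosed : IsClosed {g : ι → X | ∀ i, π (g i) = π (g i₀)} := by
    rw [ofPred_forall]
    exact isClosed_iInter fun i ↦ isClosed_eq (by fun_prop) (by fun_prop)
  have himage : {y | ((univ.pi fun _ : ι ↦ π ⁻¹' {y}) ∩ V).Nonempty} =
      (fun g : ι → X ↦ π (g i₀)) '' ({g | ∀ i, π (g i) = π (g i₀)} ∩ V) := by
    ext y
    constructor
    · rintro ⟨g, hgy, hgV⟩
      exact ⟨g, ⟨fun i ↦ (hgy i trivial).trans (hgy i₀ trivial).symm, hgV⟩, hgy i₀ trivial⟩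
    · rintro ⟨g, ⟨hgπ, hgV⟩, rfl⟩
      exact ⟨g, fun i _ ↦ hgπ i, hgV⟩
  rw [himage]
  exact measurableSet_of_isSigmaCompact <| .image (by fun_prop) <|
    isSigmaCompact_inter_of_isOpen
      (isSigmaCompact_univ.of_isClosed_subset hclosed (subset_univ _)) hV

theorem measurable_sepMaxCard_fiber (hT : Continuous T) (hπ : Continuous π) (hε : 0 ≤ ε) :
    Measurable fun y ↦ sepMaxCard T n ε (π ⁻¹' {y}) := by
  refine measurable_of_Ioi fun c ↦ ?_
  simp only [preimage, mem_Ioi, lt_sepMaxCard_iff_exists_sepFamilies hε, ofPred_exists, ofPred_and]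
  exact .iUnion fun k ↦ (MeasurableSet.const _).inter
    (measurableSet_pi_fiber_inter_nonempty hπ (isOpen_sepFamilies hT))

theorem measurable_subEnt_fiber (hT : Continuous T) (hπ : Continuous π) :
    Measurable fun y ↦ subEnt T (π ⁻¹' {y}) := by
  simp only [subEnt_eq_iSup_nat, sepEnt, div_eq_mul_inv]
  exact .iSup fun m ↦ .limsup fun n ↦
    (measurable_sepMaxCard_fiber hT hπ (by positivity)).ennreal_log.mul_const _

end Measurability

section Ergodic

theorem exists_ae_eq_const_of_ae_le_comp {α β : Type*} [MeasurableSpace α] {S : α → α}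
    {ν : Measure α} [IsFiniteMeasure ν] [LinearOrder β] [TopologicalSpace β] [OrderTopology β]
    [SecondCountableTopology β] [Nonempty β] [MeasurableSpace β] [OpensMeasurableSpace β]
    (hS : Ergodic S ν) {f : α → β} (hf : AEMeasurable f ν) (hle : f ≤ᵐ[ν] f ∘ S) :
    ∃ c, f =ᵐ[ν] Function.const α c := by
  refine exists_eventuallyEq_const_of_forall_separating (· ∈ range (Ioi : β → Set β)) ?_
  rintro _ ⟨c, rfl⟩
  have hsub : f ⁻¹' Ioi c ≤ᵐ[ν] S ⁻¹' (f ⁻¹' Ioi c) :=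
    hle.mono fun y hy hcy ↦ lt_of_lt_of_le hcy hy
  obtain h | h := hS.ae_empty_or_univ_of_ae_le_preimage
    (hf.nullMeasurableSet_preimage measurableSet_Ioi) hsub
  · exact .inr (eventuallyEq_empty.1 h)
  · exact .inl (eventuallyEq_univ.1 h)

end Ergodic

section FiberEntropy

variable [PseudoMetricSpace X] {T : X → X} {S : Y → Y} {π : X → Y}

theorem subEnt_fiber_le_subEnt_fiber_apply (hcomm : Function.Semiconj π T S) {y : Y}
    (hfib : IsCompact (π ⁻¹' {y})) : subEnt T (π ⁻¹' {y}) ≤ subEnt T (π ⁻¹' {S y}) := by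
  refine (subEnt_le_subEnt_image hfib).trans (subEnt_mono (image_subset_iff.2 fun x hx ↦ ?_))
  exact (hcomm x).trans (congrArg S hx)

theorem exists_ae_subEnt_fiber_eq [SigmaCompactSpace X] [TopologicalSpace Y] [T2Space Y]
    [MeasurableSpace Y] [OpensMeasurableSpace Y] (hT : Continuous T) (hπ : Continuous π)
    (hfib : ∀ y, IsCompact (π ⁻¹' {y})) (hcomm : Function.Semiconj π T S)
    {ν : Measure Y} [IsFiniteMeasure ν] (hν : Ergodic S ν) :
    ∃ c, ∀ᵐ y ∂ν, subEnt T (π ⁻¹' {y}) = c :=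
  exists_ae_eq_const_of_ae_le_comp hν (measurable_subEnt_fiber hT hπ).aemeasurable <|
    .of_forall fun y ↦ subEnt_fiber_le_subEnt_fiber_apply hcomm (hfib y)

theorem coe_erealToENNReal {x : EReal} (hx : 0 ≤ x) : (erealToENNReal x : EReal) = x :=
  EReal.coe_toENNReal hx

theorem exists_countable_compact_with_fiber_entropy_general [SigmaCompactSpace X]
    [TopologicalSpace Y] [T2Space Y] [MeasurableSpace Y] [OpensMeasurableSpace Y]
    (hT : Continuous T) (hπ : Continuous π) (hπs : Function.Surjective π)
    (hfib : ∀ y, IsCompact (π ⁻¹' {y})) (hcomm : Function.Semiconj π T S)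
    {ν : Measure Y} [IsProbabilityMeasure ν] (hν : Ergodic S ν) :
    ∀ᵐ y ∂ν, ∃ K ⊆ π ⁻¹' {y}, K.Countable ∧ IsCompact K ∧
      subEnt T K = ((∫⁻ z, erealToENNReal (subEnt T (π ⁻¹' {z})) ∂ν : ℝ≥0∞) : EReal) := by
  obtain ⟨c, hc⟩ := exists_ae_subEnt_fiber_eq hT hπ hfib hcomm hν
  have hint : ∫⁻ z, erealToENNReal (subEnt T (π ⁻¹' {z})) ∂ν = erealToENNReal c := by
    rw [lintegral_congr_ae (hc.mono fun z hz ↦ congrArg erealToENNReal hz), lintegral_const,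
      measure_univ, mul_one]
  filter_upwards [hc] with y hy
  have hne : (π ⁻¹' {y}).Nonempty := hπs y
  obtain ⟨K, hKy, hKcount, hKcomp, hKent⟩ := exists_countable_isCompact_subEnt_eq (hfib y) hne
  refine ⟨K, hKy, hKcount, hKcomp, ?_⟩
  rw [hint, coe_erealToENNReal (hy ▸ subEnt_nonneg hne), hKent, hy]

end FiberEntropy

/-- For a factor map `π : (X,T) → (Y,S)` between GTDSs and an ergodic
`S`-invariant Borel probability measure `ν` on `Y`, there exists a countable compact
`K ⊆ X` with `h(T,K) = h(T,X|ν) = ∫_Y h(T,π⁻¹(y)) dν(y)`. -/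
theorem exists_countable_compact_with_fiber_entropy {X Y : Type*}
    [MetricSpace X] [CompactSpace X]
    [MetricSpace Y] [CompactSpace Y] [MeasurableSpace Y] [BorelSpace Y]
    (T : X → X) (hT : Continuous T) (S : Y → Y) (hS : Continuous S)
    (π : X → Y) (hπc : Continuous π) (hπs : Function.Surjective π)
    (hcomm : π ∘ T = S ∘ π)
    (ν : Measure Y) [IsProbabilityMeasure ν] (hν : Ergodic S ν) :
    ∃ K : Set X, K.Countable ∧ IsCompact K ∧
      subEnt T K =
        ((∫⁻ y, erealToENNReal (subEnt T (π ⁻¹' {y})) ∂ν : ℝ≥0∞) : EReal) := by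
  obtain ⟨y, K, -, hK⟩ := (exists_countable_compact_with_fiber_entropy_general hT hπc hπs
    (fun _ ↦ (isClosed_singleton.preimage hπc).isCompact) (congrFun hcomm) hν).exists
  exact ⟨K, hK⟩
end
end
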